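/- Let o(n,k) denote the number of ordered labeled trees on {0,1,...,n} whose maximal decreasing subtree has exactly k edges, and let z(m,k) denote the number of ordered labeled trees on {0,1,...,m} consisting of a decreasing tree with k edges together with m-k additional increasing leaves attached to it. Then for all integers n, k with 0 ≤ k < n, o(n,k) = Σ_{m=k}^{n} C(n+1, m+1) · z(m,k) · ((m-k)/(n-k)) · (n-k)^{(n-m)}, where x^{(j)} = x(x+1)···(x+j-1) is the rising factorial. -/

import Mathlib

/-- An ordered labeled tree: a root label together with an ordered list of subtrees. -/
inductive OTree : Type
  | node : ℕ → List OTree → OTree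

namespace OTree

/-- The label of the root. -/
def root : OTree → ℕ
  | node a _ => a

/-- The list of subtrees of the root (in order). -/
def children : OTree → List OTree
  | node _ ts => ts

mutual
  /-- The list of all vertex labels of the tree. -/
  def labels : OTree → List ℕ
    | node a ts => a :: labelsList ts
  def labelsList : List OTree → List ℕ
    | [] => []
    | t :: ts => labels t ++ labelsList ts
end

/-- The number of vertices of the tree. -/
def size (T : OTree) : ℕ := T.labels.length

mutual
  /-- The maximal decreasing subtree from the root: keep exactly the children whose
  label is smaller than their parent's label, recursively. -/
  def md : OTree → OTree
    | node a ts => node a (mdList a ts)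
  def mdList : ℕ → List OTree → List OTree
    | _, [] => []
    | a, t :: ts => (if t.root < a then [md t] else []) ++ mdList a ts
end

mutual
  /-- `IsZ T` states that every vertex of `T` not in the maximal decreasing subtree is a
  leaf (attached by an increasing edge to a vertex of the maximal decreasing subtree). -/
  def IsZ : OTree → Prop
    | node a ts => IsZList a ts
  def IsZList : ℕ → List OTree → Prop
    | _, [] => True
    | a, t :: ts => (if t.root < a then IsZ t else t.children = []) ∧ IsZList a ts
end

/-- `T.OnRange n` : the vertices of `T` are labeled by distinct labels and the set of
labels is exactly `{0, 1, …, n}`. -/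
def OnRange (T : OTree) (n : ℕ) : Prop :=
  T.labels.Nodup ∧ ∀ i, i ∈ T.labels ↔ i ≤ n

end OTree

/-- `T` is a member of `O_{n,k}`: an ordered labeled tree on `{0,…,n}` whose maximal
decreasing subtree has exactly `k` edges (i.e. `k+1` vertices). -/
def MemO (T : OTree) (n k : ℕ) : Prop :=
  T.OnRange n ∧ T.md.size = k + 1

/-- `T` is a member of `Z_{m,k}`: an ordered labeled tree on `{0,…,m}` consisting of a
decreasing tree with `k` edges (its maximal decreasing subtree) together with `m-k`
additional increasing leaves attached to it. -/
def MemZ (T : OTree) (m k : ℕ) : Prop :=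
  T.OnRange m ∧ T.md.size = k + 1 ∧ T.IsZ

/-!
Deleting everything below the increasing edges that leave the maximal decreasing subtree turns a
tree `T` in `O_{n,k}` into a tree in `Z_{m,k}` on a label set `S` with `m + 1` elements, and does
not change the maximal decreasing subtree. What is lost is one ordered forest for each of the
`m - k` increasing leaves, and these forests are arbitrary apart from using the remaining `n - m`
labels. The number `F(r, q)` of `r`-tuples of ordered forests on `q` labels satisfies
`F(r + 1, q + 1) = F(r, q + 1) + (q + 1) F(r + 2, q)`, according to whether the first forest is
empty or starts with some vertex, and hence equals `r / (r + q)` times the rising factorial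
`(r + q)^{(q)}`.
-/

namespace OTree

theorem mdList_cons (a b : ℕ) (cs ts : List OTree) :
    mdList a (node b cs :: ts) =
      (if b < a then [node b (mdList b cs)] else []) ++ mdList a ts := rfl

theorem isZList_cons (a b : ℕ) (cs ts : List OTree) :
    IsZList a (node b cs :: ts) ↔ (if b < a then IsZList b cs else cs = []) ∧ IsZList a ts :=
  Iff.rfl

/-- Replaces mutual induction on trees and lists of trees. -/
@[elab_as_elim]
theorem forestInduction {motive : List OTree → Prop} (nil : motive [])
    (cons : ∀ b cs ts, motive cs → motive ts → motive (node b cs :: ts)) : ∀ ts, motive ts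
  | [] => nil
  | node b cs :: ts => cons b cs ts (forestInduction nil cons cs) (forestInduction nil cons ts)

/-! ### Pruning and grafting -/

/-- Pruning of a forest whose roots are the children of a vertex labeled `a`: every vertex entered
by an increasing edge loses all of its descendants. -/
def pruneList : ℕ → List OTree → List OTree
  | _, [] => []
  | a, node b cs :: ts => node b (if b < a then pruneList b cs else []) :: pruneList a ts

/-- The tree in `Z` obtained from `T` by deleting all proper descendants of the vertices that are
attached to the maximal decreasing subtree by an increasing edge. -/
def prune : OTree → OTree
  | node a ts => node a (pruneList a ts)

/-- The forests deleted by `pruneList`, one (possibly empty) forest for each increasing leaf of the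
pruned forest, in preorder. -/
def cutList : ℕ → List OTree → List (List OTree)
  | _, [] => []
  | a, node b cs :: ts => (if b < a then cutList b cs else [cs]) ++ cutList a ts

/-- The forests deleted by `prune`, one (possibly empty) forest for each increasing leaf of the
pruned tree, in preorder. -/
def cut : OTree → List (List OTree)
  | node a ts => cutList a ts

/-- Inverse of pruning: the forests in `L` are hung, in preorder, below the increasing leaves of a
pruned forest. If `L` is too short the missing forests are taken to be empty, and forests in excess
are ignored. -/
def graftList : ℕ → List OTree → List (List OTree) → List OTree
  | _, [], _ => []
  | a, node b cs :: ts, L =>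
    if b < a then
      node b (graftList b cs (L.take (cutList b cs).length)) ::
        graftList a ts (L.drop (cutList b cs).length)
    else node b L.headI :: graftList a ts L.tail

/-- The tree obtained by hanging the forests in `L`, in preorder, below the increasing leaves of a
pruned tree; see `graftList` for lists of the wrong length. -/
def graft : OTree → List (List OTree) → OTree
  | node a ts, L => node a (graftList a ts L)

theorem isZList_pruneList (a : ℕ) (ts : List OTree) : IsZList a (pruneList a ts) := by
  induction ts using forestInduction generalizing a with
  | nil => simp [pruneList, IsZList]
  | cons b cs ts ihcs ihts => by_cases h : b < a <;> simp [pruneList, isZList_cons, h, ihcs, ihts]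

theorem isZ_prune (T : OTree) : T.prune.IsZ := by
  cases T
  exact isZList_pruneList _ _

theorem mdList_pruneList (a : ℕ) (ts : List OTree) :
    mdList a (pruneList a ts) = mdList a ts := by
  induction ts using forestInduction generalizing a with
  | nil => simp [pruneList]
  | cons b cs ts ihcs ihts => by_cases h : b < a <;> simp [pruneList, mdList_cons, h, ihcs, ihts]

theorem md_prune (T : OTree) : T.prune.md = T.md := by
  cases T
  simp only [prune, md, mdList_pruneList]

theorem pruneList_eq_self {a : ℕ} {ts : List OTree} (h : IsZList a ts) : pruneList a ts = ts := by
  induction ts using forestInduction generalizing a with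
  | nil => simp [pruneList]
  | cons b cs ts ihcs ihts =>
    rw [isZList_cons] at h
    by_cases hb : b < a <;> simp_all [pruneList]

theorem prune_eq_self {T : OTree} (h : T.IsZ) : T.prune = T := by
  cases T
  exact congrArg _ (pruneList_eq_self h)

theorem coe_labelsList_eq_add (a : ℕ) (ts : List OTree) :
    (labelsList ts : Multiset ℕ) =
      labelsList (pruneList a ts) + (cutList a ts).flatMap labelsList := by
  induction ts using forestInduction generalizing a with
  | nil => simp [pruneList, cutList, labelsList]
  | cons b cs ts ihcs ihts =>
    by_cases h : b < a <;>
    simp only [pruneList, cutList, h, if_true, if_false, labelsList, labels,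
      List.flatMap_append, List.flatMap_cons, List.flatMap_nil, List.append_nil,
      ← Multiset.cons_coe, ← Multiset.coe_add, ← Multiset.singleton_add, ihts a]
    · rw [ihcs b]; abel
    · simp only [Multiset.coe_nil]; abel

theorem labels_eq_add (T : OTree) :
    (T.labels : Multiset ℕ) = T.prune.labels + T.cut.flatMap labelsList := by
  cases T
  simp only [labels, prune, cut, ← Multiset.cons_coe, Multiset.cons_add,
    ← coe_labelsList_eq_add]

theorem length_cutList_add (a : ℕ) (ts : List OTree) :
    (cutList a ts).length + (labelsList (mdList a ts)).length =
      (labelsList (pruneList a ts)).length := by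
  induction ts using forestInduction generalizing a with
  | nil => simp [pruneList, cutList, labelsList, mdList]
  | cons b cs ts ihcs ihts =>
    by_cases h : b < a <;>
      simp [pruneList, cutList, mdList_cons, labelsList, labels, h, ← ihcs, ← ihts] <;>
      omega

theorem length_cut_add_size_md (T : OTree) : T.cut.length + T.md.size = T.prune.size := by
  cases T
  simp only [cut, md, prune, size, labels, List.length_cons, ← length_cutList_add, add_assoc]

theorem length_cutList_pruneList (a : ℕ) (ts : List OTree) :
    (cutList a (pruneList a ts)).length = (cutList a ts).length := by
  induction ts using forestInduction generalizing a with
  | nil => simp [pruneList]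
  | cons b cs ts ihcs ihts => by_cases h : b < a <;> simp [pruneList, cutList, h, ihcs, ihts]

theorem graftList_pruneList_cutList (a : ℕ) (ts : List OTree) :
    graftList a (pruneList a ts) (cutList a ts) = ts := by
  induction ts using forestInduction generalizing a with
  | nil => simp [pruneList, graftList]
  | cons b cs ts ihcs ihts =>
    by_cases h : b < a <;>
      simp [pruneList, cutList, graftList, h, ihcs, ihts, length_cutList_pruneList]

theorem graft_prune_cut (T : OTree) : graft T.prune T.cut = T := by
  cases T
  simp only [prune, cut, graft, graftList_pruneList_cutList]

theorem pruneList_graftList {a : ℕ} {zs : List OTree} (h : IsZList a zs) (L : List (List OTree)) :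
    pruneList a (graftList a zs L) = zs := by
  induction zs using forestInduction generalizing a L with
  | nil => simp [graftList, pruneList]
  | cons b cs zs ihcs ihzs =>
    rw [isZList_cons] at h
    by_cases hb : b < a
    · simp [graftList, pruneList, hb, ihcs (if_pos hb ▸ h.1), ihzs h.2]
    · simp only [hb, if_false] at h
      simp [graftList, pruneList, hb, h.1, ihzs h.2]

theorem prune_graft {Z : OTree} (h : Z.IsZ) (L : List (List OTree)) : (graft Z L).prune = Z := by
  cases Z
  exact congrArg _ (pruneList_graftList h L)

theorem cutList_graftList {a : ℕ} {zs : List OTree} {L : List (List OTree)}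
    (hL : L.length = (cutList a zs).length) :
    cutList a (graftList a zs L) = L := by
  induction zs using forestInduction generalizing a L with
  | nil => simpa [graftList, cutList, eq_comm] using hL
  | cons b cs zs ihcs ihzs =>
    by_cases hb : b < a
    · simp only [cutList, hb, if_true, List.length_append] at hL
      simp only [graftList, cutList, hb, if_true]
      rw [ihcs (by simp; omega), ihzs (by simp; omega), List.take_append_drop]
    · simp only [cutList, hb, if_false, List.length_append, List.length_singleton] at hL
      obtain ⟨cs', L, rfl⟩ := List.exists_cons_of_length_pos (by omega : 0 < L.length)
      simp [graftList, cutList, hb, ihzs (a := a) (L := L) (by rw [List.length_cons] at hL; omega)]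

theorem cut_graft {Z : OTree} {L : List (List OTree)} (h : L.length = Z.cut.length) :
    (graft Z L).cut = L := by
  cases Z
  exact cutList_graftList h

/-! ### Trees on an arbitrary label set -/

/-- The analogue of `MemO` for an arbitrary label set `V`. Comparing multisets expresses at once
that the labels are distinct and that they exhaust `V`. -/
def MemOOn (V : Finset ℕ) (k : ℕ) (T : OTree) : Prop :=
  (T.labels : Multiset ℕ) = V.val ∧ T.md.size = k + 1

/-- The analogue of `MemZ` for an arbitrary label set `V`. -/
def MemZOn (V : Finset ℕ) (k : ℕ) (T : OTree) : Prop :=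
  MemOOn V k T ∧ T.IsZ

theorem onRange_iff (T : OTree) (n : ℕ) :
    T.OnRange n ↔ (T.labels : Multiset ℕ) = (Finset.range (n + 1)).val := by
  constructor
  · rintro ⟨hnodup, hmem⟩
    rw [← Multiset.coe_nodup] at hnodup
    refine (hnodup.ext (Finset.nodup _)).2 fun i => ?_
    rw [Multiset.mem_coe, hmem, Finset.mem_val, Finset.mem_range, Nat.lt_succ_iff]
  · intro h
    refine ⟨Multiset.coe_nodup.1 (h ▸ Finset.nodup _), fun i => ?_⟩
    rw [← Multiset.mem_coe, h, Finset.mem_val, Finset.mem_range, Nat.lt_succ_iff]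

theorem memO_iff (T : OTree) (n k : ℕ) : MemO T n k ↔ MemOOn (Finset.range (n + 1)) k T := by
  rw [MemO, MemOOn, onRange_iff]

theorem memZ_iff (T : OTree) (m k : ℕ) : MemZ T m k ↔ MemZOn (Finset.range (m + 1)) k T := by
  rw [MemZ, MemZOn, MemOOn, onRange_iff, and_assoc]

theorem size_eq_card {V : Finset ℕ} {T : OTree} (h : (T.labels : Multiset ℕ) = V.val) :
    T.size = V.card := by
  simpa [size] using congrArg Multiset.card h

theorem MemZOn.length_cut {S : Finset ℕ} {k : ℕ} {Z : OTree} (h : MemZOn S k Z) :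
    Z.cut.length = S.card - (k + 1) := by
  rw [← size_eq_card h.1.1, ← h.1.2]
  conv_rhs => rw [← prune_eq_self h.2, ← length_cut_add_size_md, md_prune, Nat.add_sub_cancel]

theorem MemZOn.lt_card {V : Finset ℕ} {k : ℕ} {T : OTree} (h : MemZOn V k T) : k < V.card := by
  have := length_cut_add_size_md T
  rw [prune_eq_self h.2, size_eq_card h.1.1, h.1.2] at this
  omega

/-- The forest obtained by applying `f` to all labels. -/
def relabelList (f : ℕ → ℕ) : List OTree → List OTree
  | [] => []
  | node b cs :: ts => node (f b) (relabelList f cs) :: relabelList f ts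

/-- The tree obtained by applying `f` to all labels. -/
def relabel (f : ℕ → ℕ) : OTree → OTree
  | node a ts => node (f a) (relabelList f ts)

theorem labelsList_relabelList (f : ℕ → ℕ) (ts : List OTree) :
    labelsList (relabelList f ts) = (labelsList ts).map f := by
  induction ts using forestInduction with
  | nil => simp [relabelList, labelsList]
  | cons b cs ts ihcs ihts => simp [relabelList, labelsList, labels, ihcs, ihts]

theorem labels_relabel (f : ℕ → ℕ) (T : OTree) : (relabel f T).labels = T.labels.map f := by
  cases T
  simp only [relabel, labels, labelsList_relabelList, List.map_cons]

theorem relabelList_relabelList {f g : ℕ → ℕ} {ts : List OTree}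
    (h : ∀ i ∈ labelsList ts, f (g i) = i) : relabelList f (relabelList g ts) = ts := by
  induction ts using forestInduction with
  | nil => simp [relabelList]
  | cons b cs ts ihcs ihts => simp_all [relabelList, labelsList, labels]

theorem relabel_relabel {f g : ℕ → ℕ} {T : OTree} (h : ∀ i ∈ T.labels, f (g i) = i) :
    relabel f (relabel g T) = T := by
  cases T
  simp_all [relabel, labels, relabelList_relabelList]

theorem mdList_relabelList {f : ℕ → ℕ} (hf : StrictMono f) (a : ℕ) (ts : List OTree) :
    mdList (f a) (relabelList f ts) = relabelList f (mdList a ts) := by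
  induction ts using forestInduction generalizing a with
  | nil => simp [relabelList, mdList]
  | cons b cs ts ihcs ihts =>
    by_cases h : b < a <;> simp [relabelList, mdList_cons, hf.lt_iff_lt, h, ihcs, ihts]

theorem size_md_relabel (f : ℕ ↪o ℕ) (T : OTree) : (relabel f T).md.size = T.md.size := by
  cases T
  simp only [relabel, md, size, labels, mdList_relabelList f.strictMono, labelsList_relabelList,
    List.length_cons, List.length_map]

theorem isZList_relabelList {f : ℕ → ℕ} (hf : StrictMono f) (a : ℕ) (ts : List OTree) :
    IsZList (f a) (relabelList f ts) ↔ IsZList a ts := by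
  induction ts using forestInduction generalizing a with
  | nil => simp [relabelList, IsZList]
  | cons b cs ts ihcs ihts =>
    have hnil : relabelList f cs = [] ↔ cs = [] := by
      rcases cs with _ | ⟨⟨_, _⟩, _⟩ <;> simp [relabelList]
    by_cases h : b < a <;> simp [relabelList, isZList_cons, hf.lt_iff_lt, h, hnil, ihcs, ihts]

theorem isZ_relabel (f : ℕ ↪o ℕ) (T : OTree) : (relabel f T).IsZ ↔ T.IsZ := by
  cases T
  exact isZList_relabelList f.strictMono _ _

theorem memZOn_map_relabel (f : ℕ ↪o ℕ) (S : Finset ℕ) (k : ℕ) (T : OTree) :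
    MemZOn (S.map f.toEmbedding) k (relabel f T) ↔ MemZOn S k T := by
  have hlabels : ((relabel f T).labels : Multiset ℕ) = (S.map f.toEmbedding).val ↔
      (T.labels : Multiset ℕ) = S.val := by
    rw [labels_relabel, ← Multiset.map_coe, Finset.map_val]
    exact (Multiset.map_injective f.injective).eq_iff
  rw [MemZOn, MemOOn, hlabels, size_md_relabel, isZ_relabel, MemZOn, MemOOn]

theorem card_memZOn_map (f : ℕ ↪o ℕ) (S : Finset ℕ) (k : ℕ) :
    Nat.card {T // MemZOn (S.map f.toEmbedding) k T} = Nat.card {T // MemZOn S k T} := by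
  have hleft (T : OTree) : relabel (Function.invFun f) (relabel f T) = T :=
    relabel_relabel fun i _ => Function.leftInverse_invFun f.injective i
  have hright (T : OTree) (hT : MemZOn (S.map f.toEmbedding) k T) :
      relabel f (relabel (Function.invFun f) T) = T := by
    refine relabel_relabel fun i hi => Function.invFun_eq ?_
    rw [← Multiset.mem_coe, hT.1.1, Finset.mem_val, Finset.mem_map] at hi
    exact hi.imp fun _ => And.right
  exact Nat.card_congr
    { toFun T := ⟨relabel (Function.invFun f) T,
        (memZOn_map_relabel f S k _).1 ((hright T T.2).symm ▸ T.2)⟩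
      invFun T := ⟨relabel f T, (memZOn_map_relabel f S k T).2 T.2⟩
      left_inv T := Subtype.ext (hright T T.2)
      right_inv T := Subtype.ext (hleft T) }

theorem exists_orderEmbedding_map_range_eq (S : Finset ℕ) :
    ∃ f : ℕ ↪o ℕ, (Finset.range S.card).map f.toEmbedding = S := by
  induction S using Finset.induction_on_max with
  | empty => exact ⟨RelEmbedding.refl _, rfl⟩
  | insert a S hlt ih =>
    obtain ⟨f, hf⟩ := ih
    have hfa (i : ℕ) (hi : i < S.card) : f i < a :=
      hlt _ (hf.le (Finset.mem_map_of_mem _ (Finset.mem_range.2 hi)))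
    let g (i : ℕ) : ℕ := if i < S.card then f i else a + (i - S.card)
    have hg : StrictMono g := by
      intro i j hij
      have := f.strictMono hij
      have := hfa i
      grind
    refine ⟨OrderEmbedding.ofStrictMono g hg, ?_⟩
    rw [Finset.card_insert_of_notMem fun ha => (hlt a ha).false, Finset.range_add_one,
      Finset.map_insert]
    congr 1
    · simp [g]
    · conv_rhs => rw [← hf]
      simp only [Finset.map_eq_image]
      exact Finset.image_congr fun i hi => by simp_all [g]

theorem card_memZOn (S : Finset ℕ) (k : ℕ) :
    Nat.card {T // MemZOn S k T} = Nat.card {T // MemZOn (Finset.range S.card) k T} := by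
  obtain ⟨f, hf⟩ := exists_orderEmbedding_map_range_eq S
  rw [← card_memZOn_map f (Finset.range S.card), hf]

/-! ### Tuples of forests -/

/-- `L` is an `r`-tuple of ordered labeled forests whose labels are jointly distinct and exhaust
`Q`. -/
def IsForestTuple (r : ℕ) (Q : Finset ℕ) (L : List (List OTree)) : Prop :=
  L.length = r ∧ (L.flatMap labelsList : Multiset ℕ) = Q.val

theorem isForestTuple_zero_iff {Q : Finset ℕ} {L : List (List OTree)} :
    IsForestTuple 0 Q L ↔ L = [] ∧ Q = ∅ := by
  rw [IsForestTuple, List.length_eq_zero_iff]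
  refine and_congr_right fun hL => ?_
  simp [hL, eq_comm]

theorem isForestTuple_nil_cons {r : ℕ} {Q : Finset ℕ} {L : List (List OTree)} :
    IsForestTuple (r + 1) Q ([] :: L) ↔ IsForestTuple r Q L := by
  simp [IsForestTuple, labelsList]

theorem isForestTuple_node_cons {r a : ℕ} {Q : Finset ℕ} {cs ts : List OTree}
    {L : List (List OTree)} :
    IsForestTuple (r + 1) Q ((node a cs :: ts) :: L) ↔
      a ∈ Q ∧ IsForestTuple (r + 2) (Q.erase a) (cs :: ts :: L) := by
  have cons_eq_val (M : Multiset ℕ) : a ::ₘ M = Q.val ↔ a ∈ Q ∧ M = (Q.erase a).val := by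
    rw [Finset.erase_val]
    constructor
    · intro h
      simp [← Finset.mem_val, ← h]
    · rintro ⟨ha, rfl⟩
      exact Multiset.cons_erase ha
  simp only [IsForestTuple, List.flatMap_cons, labelsList, labels, List.cons_append,
    List.append_assoc, ← Multiset.cons_coe, cons_eq_val, List.length_cons, Nat.add_right_cancel_iff]
  tauto

/-- Either the first forest of a tuple is empty and can be dropped, or its first vertex `a` can be
removed, which splits the forest into the forest below `a` and the forest to the right of `a`. -/
def forestTupleEquiv (r : ℕ) (Q : Finset ℕ) :
    {L // IsForestTuple (r + 1) Q L} ≃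
      {L // IsForestTuple r Q L} ⊕ (a : Q) × {L // IsForestTuple (r + 2) (Q.erase a) L} where
  toFun
    | ⟨[], h⟩ => absurd h.1 (by simp)
    | ⟨[] :: L, h⟩ => .inl ⟨L, isForestTuple_nil_cons.1 h⟩
    | ⟨(node a cs :: ts) :: L, h⟩ =>
      .inr ⟨⟨a, (isForestTuple_node_cons.1 h).1⟩, cs :: ts :: L, (isForestTuple_node_cons.1 h).2⟩
  invFun
    | .inl ⟨L, h⟩ => ⟨[] :: L, isForestTuple_nil_cons.2 h⟩
    | .inr ⟨a, cs :: ts :: L, h⟩ => ⟨(node a cs :: ts) :: L, isForestTuple_node_cons.2 ⟨a.2, h⟩⟩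
    | .inr ⟨_, [], h⟩ | .inr ⟨_, [_], h⟩ => absurd h.1 (by simp)
  left_inv
    | ⟨[], h⟩ => absurd h.1 (by simp)
    | ⟨[] :: _, _⟩ | ⟨(node _ _ :: _) :: _, _⟩ => rfl
  right_inv
    | .inl _ => rfl
    | .inr ⟨_, _ :: _ :: _, _⟩ => rfl
    | .inr ⟨_, [], h⟩ | .inr ⟨_, [_], h⟩ => absurd h.1 (by simp)

theorem finite_forestTuple (r : ℕ) (Q : Finset ℕ) : Finite {L // IsForestTuple r Q L} := by
  -- Removing a vertex lowers `#Q` by one but raises `r` by one.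
  induction hN : 2 * Q.card + r using Nat.strong_induction_on generalizing r Q with
  | _ N ih =>
    cases r with
    | zero =>
      exact (Set.finite_singleton []).subset fun L hL => (isForestTuple_zero_iff.1 hL).1
    | succ r =>
      have := ih _ (by omega) r Q rfl
      have (a : Q) : Finite {L // IsForestTuple (r + 2) (Q.erase a) L} :=
        ih _ (by have := Finset.card_erase_add_one a.2; omega) _ _ rfl
      exact Finite.of_equiv _ (forestTupleEquiv r Q).symm

/-- The number of `r`-tuples of ordered forests on `q` labels in total, i.e.
`r / (r + q) * (r + q)^{(q)}` without the division; at `r = q = 0`, where that quotient would be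
`0`, the value is `1`. -/
def forestTupleCount : ℕ → ℕ → ℕ
  | _, 0 => 1
  | r, q + 1 => r * (r + q + 2).ascFactorial q

theorem forestTupleCount_succ_succ (r q : ℕ) :
    forestTupleCount (r + 1) (q + 1) =
      forestTupleCount r (q + 1) + (q + 1) * forestTupleCount (r + 2) q := by
  cases q with
  | zero => simp [forestTupleCount]
  | succ p =>
    simp only [forestTupleCount]
    have hleft : (r + 1 + (p + 1) + 2).ascFactorial (p + 1) =
        (r + 2 * p + 4) * (r + 2 + p + 2).ascFactorial p := by
      rw [Nat.ascFactorial_succ, show r + 1 + (p + 1) + 2 = r + 2 + p + 2 by ring]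
      ring
    have hright : (r + (p + 1) + 2).ascFactorial (p + 1) =
        (r + p + 3) * (r + 2 + p + 2).ascFactorial p := by
      rw [Nat.ascFactorial_succ, ← Nat.succ_ascFactorial,
        show (r + (p + 1) + 2).succ = r + 2 + p + 2 by lia,
        show r + (p + 1) + 2 = r + p + 3 by ring]
    rw [hleft, hright]
    ring

theorem card_forestTuple (r : ℕ) (Q : Finset ℕ) :
    Nat.card {L // IsForestTuple r Q L} = forestTupleCount r Q.card := by
  induction hN : 2 * Q.card + r using Nat.strong_induction_on generalizing r Q with
  | _ N ih =>
    have := finite_forestTuple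
    cases r with
    | zero =>
      simp only [isForestTuple_zero_iff]
      rcases hq : Q.card with _ | q
      · simp [Finset.card_eq_zero.1 hq, forestTupleCount]
      · have : Q ≠ ∅ := by rintro rfl; simp at hq
        simp [this, forestTupleCount]
    | succ r =>
      have hnil : Nat.card {L // IsForestTuple r Q L} = forestTupleCount r Q.card :=
        ih _ (by omega) r Q rfl
      have hnode (a : Q) : Nat.card {L // IsForestTuple (r + 2) (Q.erase a) L} =
          forestTupleCount (r + 2) (Q.card - 1) := by
        rw [← Finset.card_erase_of_mem a.2]
        exact ih _ (by have := Finset.card_erase_add_one a.2; omega) _ _ rfl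
      rw [Nat.card_congr (forestTupleEquiv r Q), Nat.card_sum, Nat.card_sigma, hnil]
      simp only [hnode, Finset.sum_const, Finset.card_univ, Fintype.card_coe, smul_eq_mul]
      cases Q.card with
      | zero => simp [forestTupleCount]
      | succ q => rw [forestTupleCount_succ_succ, Nat.add_sub_cancel]

theorem cast_forestTupleCount (r q : ℕ) (h : 0 < r + q) :
    (forestTupleCount r q : ℚ) = r / (r + q : ℕ) * (r + q).ascFactorial q := by
  have h0 : ((r + q : ℕ) : ℚ) ≠ 0 := by exact_mod_cast h.ne'
  rw [div_mul_eq_mul_div, eq_div_iff h0]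
  norm_cast
  cases q with
  | zero => simp [forestTupleCount]
  | succ q =>
    rw [forestTupleCount, Nat.ascFactorial_succ, ← Nat.succ_ascFactorial]
    simp [← add_assoc]
    ring

/-! ### Counting trees by the label set of their pruning -/

theorem finite_memOOn (V : Finset ℕ) (k : ℕ) : Finite {T // MemOOn V k T} := by
  have := finite_forestTuple 1 V
  refine Finite.of_injective (β := {L // IsForestTuple 1 V L}) (fun T => ⟨[[T.1]], rfl, ?_⟩) ?_
  · simpa [labelsList] using T.2.1
  · intro T U h
    simpa [Subtype.ext_iff] using h

theorem memOOn_and_labels_prune_iff {V S : Finset ℕ} (hS : S ⊆ V) (k : ℕ) (T : OTree) :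
    MemOOn V k T ∧ (T.prune.labels : Multiset ℕ) = S.val ↔
      MemZOn S k T.prune ∧ IsForestTuple (S.card - (k + 1)) (V \ S) T.cut := by
  have hrest (hprune : (T.prune.labels : Multiset ℕ) = S.val) :
      (T.labels : Multiset ℕ) = V.val ↔ (T.cut.flatMap labelsList : Multiset ℕ) = (V \ S).val := by
    rw [labels_eq_add, hprune, Finset.sdiff_val, add_comm,
      eq_tsub_iff_add_eq_of_le (Finset.val_le_iff.2 hS)]
  have hlength (hprune : (T.prune.labels : Multiset ℕ) = S.val) (hmd : T.md.size = k + 1) :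
      T.cut.length = S.card - (k + 1) := by
    rw [← size_eq_card hprune, ← length_cut_add_size_md, hmd, Nat.add_sub_cancel]
  rw [MemOOn, MemZOn, MemOOn, IsForestTuple, md_prune]
  constructor
  · rintro ⟨⟨hV, hmd⟩, hprune⟩
    exact ⟨⟨⟨hprune, hmd⟩, isZ_prune T⟩, hlength hprune hmd, (hrest hprune).1 hV⟩
  · rintro ⟨⟨⟨hprune, hmd⟩, -⟩, -, hcut⟩
    exact ⟨⟨(hrest hprune).2 hcut, hmd⟩, hprune⟩

/-- A tree on `V` whose pruning has label set `S` amounts to that pruning together with the tuple of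
deleted forests. -/
def pruneEquiv {V S : Finset ℕ} (hS : S ⊆ V) (k : ℕ) :
    {T // MemOOn V k T ∧ (T.prune.labels : Multiset ℕ) = S.val} ≃
      {Z // MemZOn S k Z} × {L // IsForestTuple (S.card - (k + 1)) (V \ S) L} where
  toFun T :=
    have h := (memOOn_and_labels_prune_iff hS k T).1 T.2
    (⟨T.1.prune, h.1⟩, ⟨T.1.cut, h.2⟩)
  invFun := fun ⟨Z, L⟩ => ⟨graft Z L, by
    rw [memOOn_and_labels_prune_iff hS, prune_graft Z.2.2,
      cut_graft (L.2.1.trans Z.2.length_cut.symm)]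
    exact ⟨Z.2, L.2⟩⟩
  left_inv T := Subtype.ext (graft_prune_cut T.1)
  right_inv := fun ⟨Z, L⟩ => Prod.ext (Subtype.ext (prune_graft Z.2.2 L))
    (Subtype.ext (cut_graft (L.2.1.trans Z.2.length_cut.symm)))

theorem card_memOOn_eq_sum_powerset (V : Finset ℕ) (k : ℕ) :
    Nat.card {T // MemOOn V k T} =
      ∑ S ∈ V.powerset, Nat.card {Z // MemZOn S k Z} *
        forestTupleCount (S.card - (k + 1)) (V.card - S.card) := by
  have hle (T : {T // MemOOn V k T}) : (T.1.prune.labels : Multiset ℕ) ≤ V.val := by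
    rw [← T.2.1, labels_eq_add T.1]
    exact Multiset.le_add_right _ _
  let pruneSupport (T : {T // MemOOn V k T}) : V.powerset :=
    ⟨⟨T.1.prune.labels, Multiset.nodup_of_le (hle T) V.nodup⟩,
      Finset.mem_powerset.2 (Finset.val_le_iff.1 (hle T))⟩
  have hfiber (S : V.powerset) : Nat.card {T // pruneSupport T = S} =
      Nat.card {Z // MemZOn S k Z} *
        forestTupleCount (S.1.card - (k + 1)) (V.card - S.1.card) := by
    have hS := Finset.mem_powerset.1 S.2
    rw [← Finset.card_sdiff_of_subset hS, ← card_forestTuple, ← Nat.card_prod,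
      ← Nat.card_congr (pruneEquiv hS k),
      ← Nat.card_congr (Equiv.subtypeSubtypeEquivSubtypeInter _ _)]
    simp only [pruneSupport, Subtype.ext_iff, ← Finset.val_inj]
  have := finite_memOOn V k
  rw [← Nat.card_congr (Equiv.sigmaFiberEquiv pruneSupport), Nat.card_sigma,
    ← Finset.sum_coe_sort V.powerset]
  exact Finset.sum_congr rfl fun S _ => hfiber S

theorem card_memOOn (V : Finset ℕ) (k : ℕ) :
    Nat.card {T // MemOOn V k T} =
      ∑ s ∈ Finset.Ioc k V.card, V.card.choose s *
        (Nat.card {Z // MemZOn (Finset.range s) k Z} *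
          forestTupleCount (s - (k + 1)) (V.card - s)) := by
  rw [card_memOOn_eq_sum_powerset]
  rw [Finset.sum_congr rfl fun S _ => by rw [card_memZOn S k]]
  rw [Finset.sum_powerset_apply_card (fun s => Nat.card {Z // MemZOn (Finset.range s) k Z} *
    forestTupleCount (s - (k + 1)) (V.card - s))]
  refine (Finset.sum_subset (fun s hs => ?_) fun s hs hs' => ?_).symm
  · rw [Finset.mem_Ioc] at hs
    exact Finset.mem_range.2 (Nat.lt_succ_of_le hs.2)
  · have : IsEmpty {Z // MemZOn (Finset.range s) k Z} := by
      refine ⟨fun Z => hs' ?_⟩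
      have hlt := Z.2.lt_card
      rw [Finset.card_range] at hlt
      exact Finset.mem_Ioc.2 ⟨hlt, Nat.le_of_lt_succ (Finset.mem_range.1 hs)⟩
    simp

theorem card_memO (n k : ℕ) :
    Nat.card {T // MemO T n k} =
      ∑ m ∈ Finset.Icc k n, (n + 1).choose (m + 1) *
        (Nat.card {T // MemZ T m k} * forestTupleCount (m - k) (n - m)) := by
  simp only [memO_iff, memZ_iff, card_memOOn, Finset.card_range]
  rw [← Finset.Icc_add_one_left_eq_Ioc, ← Finset.map_add_right_Icc, Finset.sum_map]
  simp

end OTree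

/-- For `0 ≤ k < n`,
`o(n,k) = ∑_{m=k}^{n} C(n+1, m+1) · z(m,k) · ((m-k)/(n-k)) · (n-k)^{(n-m)}`,
where `x^{(j)}` is the rising factorial `x(x+1)⋯(x+j-1)`. -/
theorem o_formula (n k : ℕ) (hkn : k < n) :
    (Nat.card {T : OTree // MemO T n k} : ℚ) =
      ∑ m ∈ Finset.Icc k n,
        ((n + 1).choose (m + 1) : ℚ) * (Nat.card {T : OTree // MemZ T m k} : ℚ) *
          (((m : ℚ) - (k : ℚ)) / ((n : ℚ) - (k : ℚ))) *
          ((n - k).ascFactorial (n - m) : ℚ) := by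
  rw [OTree.card_memO, Nat.cast_sum]
  refine Finset.sum_congr rfl fun m hm => ?_
  obtain ⟨hkm, hmn⟩ := Finset.mem_Icc.1 hm
  have hsum : m - k + (n - m) = n - k := by omega
  rw [Nat.cast_mul, Nat.cast_mul, OTree.cast_forestTupleCount _ _ (by omega), hsum,
    Nat.cast_sub hkm, Nat.cast_sub hkn.le]
  ring
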